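/- arXiv:1812.04705 — 2 statements merged into one kernel-verified Lean document; each statement's English description precedes it below -/
import Mathlib

section
/- Let α be a composition of N, let R_α be the connected ribbon with row lengths α, and let ν be a partition of N. Then the Littlewood–Richardson coefficient c_{R_α}^ν — the number of LR tableaux of shape R_α and content ν — equals the number of standard Young tableaux of shape ν whose descent set is exactly S(α); equivalently, it equals the number of T ∈ Tab(ν,α) whose standardization T̂ has descent set S(α). -/
namespace RibbonSupport

/-- A partition: a weakly decreasing list of positive integers. -/
def IsPartition (a : List ℕ) : Prop := a.Pairwise (· ≥ ·) ∧ ∀ x ∈ a, 0 < x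

/-- All parts of the list are at least `m`. -/
def PartsGE (a : List ℕ) (m : ℕ) : Prop := ∀ x ∈ a, m ≤ x

/-- Dominance order `lam ⪯ mu` on partitions of the same size. -/
def DomLE (lam mu : List ℕ) : Prop :=
  lam.sum = mu.sum ∧ ∀ i, (lam.take i).sum ≤ (mu.take i).sum

/-- The number of nonzero parts. -/
def lenp (p : List ℕ) : ℕ := p.countP (fun x => decide (x ≠ 0))

/-- `p` is an overlapping partition for the monotone ribbon with row lengths `a`:
`p` has the same length as `a`, its last entry is `0`, and consecutive entries
decrease by `0` or `1`. -/
def IsOverlapSeq (a p : List ℕ) : Prop :=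
  p.length = a.length ∧ p.getD (a.length - 1) 0 = 0 ∧
    ∀ i, i + 1 < a.length →
      p.getD i 0 = p.getD (i + 1) 0 ∨ p.getD i 0 = p.getD (i + 1) 0 + 1

/-- Rows `i` and `i+1` (0-based, top to bottom) of `R_a^p` overlap
(share exactly one column) exactly when `p_i = p_{i+1} + 1`. -/
def ovOf (p : List ℕ) : ℕ → Bool := fun i => decide (p.getD i 0 = p.getD (i + 1) 0 + 1)

def rowOffset (a : List ℕ) (i : ℕ) : ℕ := (a.take i).sum

/-- `w` is the reading word (rows right-to-left, top to bottom) of a semistandard filling of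
the ribbon with row lengths `a` (top to bottom) in which consecutive rows `i`, `i+1` share
exactly one column when `ov i = true` and no column otherwise.  Semistandardness amounts to:
within each row block the word is weakly decreasing (rows weakly increase left to right), and
at each overlapping gap the word strictly increases (columns strictly increase downwards). -/
def IsRibbonWord (a : List ℕ) (ov : ℕ → Bool) (w : List ℕ) : Prop :=
  w.length = a.sum ∧
  (∀ i j, i < a.length → j + 1 < a.getD i 0 →
    w.getD (rowOffset a i + j + 1) 0 ≤ w.getD (rowOffset a i + j) 0) ∧
  (∀ i, i + 1 < a.length → ov i = true →
    w.getD (rowOffset a (i + 1) - 1) 0 < w.getD (rowOffset a (i + 1)) 0)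

/-- Yamanouchi (lattice) word: each prefix has at least as many letters `j` as `j+1`. -/
def IsYam (w : List ℕ) : Prop := ∀ k j, (w.take k).count (j + 2) ≤ (w.take k).count (j + 1)

/-- The word `w` has content `nu` (and only positive letters). -/
def HasContent (w : List ℕ) (nu : List ℕ) : Prop :=
  (∀ j, w.count (j + 1) = nu.getD j 0) ∧ w.count 0 = 0

/-- There is an LR filling of the ribbon `(a, ov)` with content `nu`. -/
def InSupportOv (a : List ℕ) (ov : ℕ → Bool) (nu : List ℕ) : Prop :=
  ∃ w : List ℕ, IsRibbonWord a ov w ∧ IsYam w ∧ HasContent w nu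

/-- `nu` is in the Schur support of the monotone ribbon `R_a^p`. -/
def InSupport (a p nu : List ℕ) : Prop := InSupportOv a (ovOf p) nu

/-- `nu` is in the Schur support of the connected ribbon `R_a`. -/
def InSupportConn (a nu : List ℕ) : Prop := InSupportOv a (fun _ => true) nu

/-- `nu` belongs to the Schur interval `[a, (|a| - p₁, p₁)]` in dominance order. -/
def InInterval (a p nu : List ℕ) : Prop :=
  DomLE a nu ∧ DomLE nu [a.sum - p.getD 0 0, p.getD 0 0]

/-- The Schur support of `R_a^p`, as a set of partitions. -/
def SupportSet (a p : List ℕ) : Set (List ℕ) := {nu | IsPartition nu ∧ InSupport a p nu}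

/-- The Schur interval of `R_a^p`, as a set of partitions. -/
def IntervalSet (a p : List ℕ) : Set (List ℕ) := {nu | IsPartition nu ∧ InInterval a p nu}

/-- `R_a^p` has full Schur support. -/
def FullSupport (a p : List ℕ) : Prop := SupportSet a p = IntervalSet a p

/-- The Schur support of the connected ribbon `R_a`, as a set of partitions. -/
def SupportSetConn (a : List ℕ) : Set (List ℕ) := {nu | IsPartition nu ∧ InSupportConn a nu}

/-- `ϱ_i` (1-based `i`): `Σ_{q=i+1}^{ℓ(a)} a_q − p_{i+1} + 1`. -/
def rho (a p : List ℕ) (i : ℕ) : ℕ := (a.drop i).sum + 1 - p.getD i 0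

/-- Entry `j` (1-based) of the `i`-witness vector: `[ϱ_i − a_j]₊`. -/
def wit (a p : List ℕ) (i j : ℕ) : ℕ := rho a p i - a.getD (j - 1) 0

/-- Size of the `i`-witness vector. -/
def witSize (a p : List ℕ) (i : ℕ) : ℕ := ∑ j ∈ Finset.Icc 1 i, wit a p i j

/-! ### Tableaux -/

/-- Cells (0-based `(row, column)`) of the Young diagram of `lam`. -/
def cells (lam : List ℕ) : Finset (ℕ × ℕ) :=
  (Finset.range lam.length ×ˢ Finset.range (lam.sum + 1)).filter
    (fun x => x.2 < lam.getD x.1 0)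

/-- `T` is a semistandard Young tableau of shape `lam` and content `al`
(normalized to vanish off the diagram). -/
def IsTab (lam al : List ℕ) (T : ℕ × ℕ → ℕ) : Prop :=
  (∀ x, x ∉ cells lam → T x = 0) ∧
  (∀ x ∈ cells lam, 1 ≤ T x) ∧
  (∀ i c, (i, c + 1) ∈ cells lam → T (i, c) ≤ T (i, c + 1)) ∧
  (∀ i c, (i + 1, c) ∈ cells lam → T (i, c) < T (i + 1, c)) ∧
  (∀ k, ((cells lam).filter (fun x => T x = k + 1)).card = al.getD k 0)

/-- Standardization of a tableau: entries are renumbered `1, …, N` in increasing order of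
value, entries of equal value being numbered from southwest to northeast (by column). -/
def stdz (lam : List ℕ) (T : ℕ × ℕ → ℕ) : ℕ × ℕ → ℕ := fun x =>
  if x ∈ cells lam then
    ((cells lam).filter (fun y => T y < T x ∨ (T y = T x ∧ y.2 < x.2))).card + 1
  else 0

/-- `n` is a descent of the standard tableau `U`: the entry `n+1` lies in a strictly
lower row than the entry `n`. -/
def IsDescent (lam : List ℕ) (U : ℕ × ℕ → ℕ) (n : ℕ) : Prop :=
  ∃ x ∈ cells lam, ∃ y ∈ cells lam, U x = n ∧ U y = n + 1 ∧ x.1 < y.1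

/-- `S(al)`: the set of proper partial sums of the composition `al`. -/
def Sset (al : List ℕ) : Set ℕ := {n | ∃ k, 0 < k ∧ k < al.length ∧ n = (al.take k).sum}

/-- `s ∈ D(T)`: some entry `s+1` of `T` lies in a strictly lower row than some entry `s`. -/
def TabDescent (lam : List ℕ) (T : ℕ × ℕ → ℕ) (s : ℕ) : Prop :=
  ∃ x ∈ cells lam, ∃ y ∈ cells lam, T x = s ∧ T y = s + 1 ∧ x.1 < y.1

/-- The word `w_{T̂}` of `T`: its `u`-th letter (1-based) is the 1-based row index of the
entry `u` of the standardization `T̂` of `T`. -/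
def wordOf (lam : List ℕ) (T : ℕ × ℕ → ℕ) : List ℕ :=
  (List.range lam.sum).map fun n =>
    ∑ x ∈ (cells lam).filter (fun x => stdz lam T x = n + 1), (x.1 + 1)

/-- `j ∈ {2, …, ℓ(al)}` is a critical number of `T ∈ Tab(lam, al)`:
`w_{α_1+⋯+α_{j-1}} = w_{α_1+⋯+α_{j-1}+1}` in the word of `T`. -/
def CriticalNum (lam al : List ℕ) (T : ℕ × ℕ → ℕ) (j : ℕ) : Prop :=
  2 ≤ j ∧ j ≤ al.length ∧
    (wordOf lam T).getD ((al.take (j - 1)).sum - 1) 0 =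
      (wordOf lam T).getD ((al.take (j - 1)).sum) 0

/-- `j ∈ {2, …, ℓ(al)}` is a negligible critical number of `T`:
`w_{α_1+⋯+α_{j-1}} > w_{α_1+⋯+α_{j-1}+1}` in the word of `T`. -/
def NegligibleNum (lam al : List ℕ) (T : ℕ × ℕ → ℕ) (j : ℕ) : Prop :=
  2 ≤ j ∧ j ≤ al.length ∧
    (wordOf lam T).getD ((al.take (j - 1)).sum) 0 <
      (wordOf lam T).getD ((al.take (j - 1)).sum - 1) 0

/-- The overlapping partition of the ribbon encoded by its gap pattern `b`
(`b j = true` iff rows `j` and `j+1`, 0-based, overlap). -/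
def povOf (b : List Bool) : List ℕ :=
  (List.range (b.length + 1)).map fun i => (b.drop i).count true

/-! ### Connected ribbons with rows in arbitrary order -/

/-- Starting column (0-based) of row `i` of the connected ribbon with row lengths `b`. -/
def startConn (b : List ℕ) (i : ℕ) : ℕ := (b.drop (i + 1)).sum + (i + 1) - b.length

/-- Number of columns of the connected ribbon with row lengths `b`. -/
def ncols (b : List ℕ) : ℕ := b.sum + 1 - b.length

/-- Length of column `c` of the connected ribbon with row lengths `b`. -/
def colLen (b : List ℕ) (c : ℕ) : ℕ :=
  ((Finset.range b.length).filter
    (fun i => startConn b i ≤ c ∧ c < startConn b i + b.getD i 0)).card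

/-- Deletion rank of row `j`: the number of rows deleted strictly before row `j` when one
repeatedly deletes a longest remaining row in highest (most northern) position. -/
def delRank (g : List ℕ) (j : ℕ) : ℕ :=
  ((Finset.range g.length).filter
    (fun j' => g.getD j 0 < g.getD j' 0 ∨ (g.getD j' 0 = g.getD j 0 ∧ j' < j))).card

/-- The overlapping partition of the connected ribbon with row lengths `g`:
its `(d+1)`-st entry is the number of length-two columns of the ribbon remaining
after deleting `d` rows as above, i.e. the number of adjacent pairs of surviving rows. -/
def ppiList (g : List ℕ) : List ℕ :=
  (List.range g.length).map fun d =>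
    ((Finset.range (g.length - 1)).filter
      (fun j => d ≤ delRank g j ∧ d ≤ delRank g (j + 1))).card

/-!
Record a standard Young tableau `U` of shape `ν` by the word whose `u`-th letter is the row of the
entry `u`. Row `i` of `U` lists the positions of the letter `i`, so the columns of `U` increase
exactly when the word is Yamanouchi, and the words obtained are all Yamanouchi words of content
`ν`. The descents of `U` are the ascents of its word, while a word is the reading word of a filling
of the connected ribbon `R_α` exactly when its ascents occur at the proper partial sums of `α`:
inside a row the word weakly decreases, and at the column shared by two rows it strictly increases.

Standardization is a bijection from `Tab(ν, α)` onto the standard tableaux whose descent set is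
contained in `S(α)`. Its inverse replaces the entries of the `k`-th block of length `α_k` by `k`:
without descents inside a block, the entries of a block move from southwest to northeast, so the
result is semistandard and the block is renumbered in its original order.
-/

/-! ### Partial sums of a composition -/

section PartialSums

variable {a w : List ℕ} {i k m m' n : ℕ}

lemma rowOffset_zero (a : List ℕ) : rowOffset a 0 = 0 := by
  simp [rowOffset]

lemma rowOffset_succ (a : List ℕ) (k : ℕ) :
    rowOffset a (k + 1) = rowOffset a k + a.getD k 0 := by
  rw [rowOffset, List.take_add_one, List.sum_append, List.getD_eq_getElem?_getD]
  cases a[k]? <;> simp [rowOffset]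

lemma rowOffset_of_length_le (h : a.length ≤ k) : rowOffset a k = a.sum := by
  rw [rowOffset, List.take_of_length_le h]

lemma rowOffset_monotone (a : List ℕ) : Monotone (rowOffset a) :=
  monotone_nat_of_le_succ fun k => by rw [rowOffset_succ]; omega

lemma rowOffset_le_sum (a : List ℕ) (k : ℕ) : rowOffset a k ≤ a.sum := by
  rw [← rowOffset_of_length_le (le_max_left a.length k)]
  exact rowOffset_monotone a (le_max_right _ _)

lemma rowOffset_replicate_one (h : k ≤ n) : rowOffset (List.replicate n 1) k = k := by
  simpa [rowOffset, List.take_replicate] using h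

lemma sum_range_getD (a : List ℕ) (k : ℕ) :
    ∑ i ∈ Finset.range k, a.getD i 0 = rowOffset a k := by
  induction k with
  | zero => simp [rowOffset_zero]
  | succ k ih => rw [Finset.sum_range_succ, ih, rowOffset_succ]

/-- The 1-based index of the part of the composition `a` containing `m`, when `1, …, a.sum` are
cut into consecutive blocks of lengths `a₁, a₂, …`; the value at `m = 0` is `0`. -/
noncomputable def blockIndex (a : List ℕ) (m : ℕ) : ℕ := sInf {k | m ≤ rowOffset a k}

lemma blockIndex_le_iff (hm : m ≤ a.sum) : blockIndex a m ≤ k ↔ m ≤ rowOffset a k := by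
  have hne : {k | m ≤ rowOffset a k}.Nonempty :=
    ⟨a.length, hm.trans_eq (rowOffset_of_length_le le_rfl).symm⟩
  exact ⟨fun h => (Nat.sInf_mem hne).trans (rowOffset_monotone a h), fun h => Nat.sInf_le h⟩

lemma blockIndex_zero (a : List ℕ) : blockIndex a 0 = 0 :=
  Nat.le_zero.1 ((blockIndex_le_iff (Nat.zero_le _)).2 (Nat.zero_le _))

lemma blockIndex_mono (hm : m' ≤ a.sum) (h : m ≤ m') : blockIndex a m ≤ blockIndex a m' :=
  (blockIndex_le_iff (h.trans hm)).2 (h.trans ((blockIndex_le_iff hm).1 le_rfl))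

lemma blockIndex_lt_of_mem_Sset (hn : n ∈ Sset a) (hm : m ≤ n) (hm' : n < m')
    (hsum : m' ≤ a.sum) : blockIndex a m < blockIndex a m' := by
  obtain ⟨k, -, -, rfl⟩ := hn
  have hle : blockIndex a m ≤ k := (blockIndex_le_iff (hm.trans (hm'.le.trans hsum))).2 hm
  have hlt : ¬blockIndex a m' ≤ k := by
    rw [blockIndex_le_iff hsum]
    exact hm'.not_ge
  omega

lemma notMem_Sset_iff_exists_row (h0 : 0 < n) (hn : n < a.sum) :
    n ∉ Sset a ↔
      ∃ i j, i < a.length ∧ j + 1 < a.getD i 0 ∧ n = rowOffset a i + j + 1 := by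
  constructor
  · intro hS
    have hpos : 0 < blockIndex a n := by
      rw [← not_le, blockIndex_le_iff hn.le, rowOffset_zero]
      exact h0.not_ge
    obtain ⟨i, hi⟩ := Nat.exists_eq_succ_of_ne_zero hpos.ne'
    have hle : n ≤ rowOffset a (i + 1) := (blockIndex_le_iff hn.le).1 hi.le
    have hgt : ¬n ≤ rowOffset a i := by rw [← blockIndex_le_iff hn.le]; omega
    have hlen : i < a.length := by
      by_contra hc
      have := rowOffset_of_length_le (not_lt.1 hc)
      omega
    have hne : n ≠ rowOffset a (i + 1) := by
      intro hc
      refine hS ⟨i + 1, i.succ_pos, ?_, hc⟩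
      by_contra hc'
      have := rowOffset_of_length_le (not_lt.1 hc')
      omega
    have := rowOffset_succ a i
    exact ⟨i, n - rowOffset a i - 1, hlen, by omega, by omega⟩
  · rintro ⟨i, j, -, hj, rfl⟩ ⟨k, -, -, hk⟩
    change _ = rowOffset a k at hk
    have := rowOffset_succ a i
    rcases Nat.lt_or_ge i k with hik | hki
    · have : rowOffset a (i + 1) ≤ rowOffset a k := rowOffset_monotone a hik
      omega
    · have : rowOffset a k ≤ rowOffset a i := rowOffset_monotone a hki
      omega

lemma pos_and_lt_length_of_getD_pred_lt (h : w.getD (n - 1) 0 < w.getD n 0) :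
    0 < n ∧ n < w.length := by
  constructor
  · by_contra hn
    obtain rfl : n = 0 := by omega
    exact lt_irrefl _ h
  · by_contra hn
    rw [List.getD_eq_default _ _ (not_lt.1 hn)] at h
    exact absurd h (Nat.not_lt_zero _)

-- The inequality fails at `n = 0`, where `n - 1 = n`, and past the end of `w`, where the default
-- letter `0` is read.
lemma isRibbonWord_connected_iff :
    IsRibbonWord a (fun _ => true) w ↔
      w.length = a.sum ∧ ∀ n, w.getD (n - 1) 0 < w.getD n 0 ↔ n ∈ Sset a := by
  constructor
  · rintro ⟨hlen, hrow, hcol⟩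
    refine ⟨hlen, fun n => ⟨fun hasc => ?_, ?_⟩⟩
    · obtain ⟨h0, hn⟩ := pos_and_lt_length_of_getD_pred_lt hasc
      by_contra hS
      obtain ⟨i, j, hi, hj, rfl⟩ := (notMem_Sset_iff_exists_row h0 (hlen ▸ hn)).1 hS
      exact (hrow i j hi hj).not_gt hasc
    · rintro ⟨k, h0, hk, rfl⟩
      obtain ⟨i, rfl⟩ := Nat.exists_eq_succ_of_ne_zero h0.ne'
      exact hcol i hk rfl
  · rintro ⟨hlen, hasc⟩
    refine ⟨hlen, fun i j hi hj => ?_, fun i hi _ => (hasc _).2 ⟨i + 1, i.succ_pos, hi, rfl⟩⟩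
    have hlt : rowOffset a i + j + 1 < a.sum := by
      have := rowOffset_succ a i
      have := rowOffset_le_sum a (i + 1)
      omega
    exact not_lt.1 fun h => (notMem_Sset_iff_exists_row (Nat.succ_pos _) hlt).2
      ⟨i, j, hi, hj, rfl⟩ ((hasc _).1 h)

end PartialSums

/-! ### Bijections and counting -/

section Counting

open scoped Finset

lemma bijOn_sep_of_iff {α β : Type*} {f : α → β} {s : Set α} {t : Set β} {p : α → Prop}
    {q : β → Prop} (h : Set.BijOn f s t) (hpq : ∀ a ∈ s, p a ↔ q (f a)) :
    Set.BijOn f {a ∈ s | p a} {b ∈ t | q b} := by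
  convert h.subset_right (Set.sep_subset t q) using 1
  ext a
  exact and_congr_right fun ha => (hpq a ha).trans (and_iff_right (h.mapsTo ha)).symm

variable {ι : Type*} {s : Finset ι}

lemma card_filter_lt_lt_card_filter_lt_iff {α : Type*} [LinearOrder α] {f : ι → α} {x y : ι}
    (hx : x ∈ s) : #{z ∈ s | f z < f x} < #{z ∈ s | f z < f y} ↔ f x < f y := by
  constructor
  · contrapose!
    exact fun h => Finset.card_le_card
      (Finset.monotone_filter_right s fun z _ hz => hz.trans_le h)
  · intro h
    refine Finset.card_lt_card (Finset.ssubset_iff_of_subset ?_ |>.2 ⟨x, ?_, ?_⟩)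
    · exact Finset.monotone_filter_right s fun z _ hz => hz.trans h
    · simpa using ⟨hx, h⟩
    · simp

lemma card_filter_le_succ (s : Finset ι) (f : ι → ℕ) (k : ℕ) :
    #{x ∈ s | f x ≤ k + 1} = #{x ∈ s | f x ≤ k} + #{x ∈ s | f x = k + 1} := by
  classical
  rw [← Finset.card_union_of_disjoint (Finset.disjoint_filter.2 fun x _ h1 h2 => by omega),
    ← Finset.filter_or]
  simp only [Nat.le_add_one_iff]

lemma card_filter_eq_of_bijOn_Icc {f : ι → ℕ} {N : ℕ} (h : Set.BijOn f s (Finset.Icc 1 N))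
    (k : ℕ) : #{x ∈ s | f x = k + 1} = (List.replicate N 1).getD k 0 := by
  rcases Nat.lt_or_ge k N with hk | hk
  · obtain ⟨x, hx, hxk⟩ := h.surjOn (Finset.mem_coe.2 (Finset.mem_Icc.2 ⟨k.succ_pos, hk⟩))
    rw [List.getD_replicate _ hk, Finset.card_eq_one]
    refine ⟨x, Finset.ext fun y => ?_⟩
    simp only [Finset.mem_filter, Finset.mem_singleton]
    exact ⟨fun hy => h.injOn hy.1 hx (hy.2.trans hxk.symm), by rintro rfl; exact ⟨hx, hxk⟩⟩
  · rw [List.getD_eq_default _ _ (by simpa using hk), Finset.card_eq_zero,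
      Finset.filter_eq_empty_iff]
    intro x hx hxk
    have := (Finset.mem_Icc.1 (h.mapsTo hx)).2
    omega

lemma bijOn_Icc_of_card_filter_eq {f : ι → ℕ} {N : ℕ} (hpos : ∀ x ∈ s, 1 ≤ f x)
    (hcard : ∀ k, #{x ∈ s | f x = k + 1} = (List.replicate N 1).getD k 0) :
    Set.BijOn f s (Finset.Icc 1 N) := by
  have hle : ∀ x ∈ s, f x ≤ N := by
    intro x hx
    by_contra! hN
    have hempty := hcard (f x - 1)
    rw [List.getD_eq_default _ _ (by simp; omega), Finset.card_eq_zero,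
      Finset.filter_eq_empty_iff] at hempty
    exact hempty hx (Nat.sub_add_cancel (hpos x hx)).symm
  have hone : ∀ n ∈ Finset.Icc 1 N, #{x ∈ s | f x = n} = 1 := by
    intro n hn
    obtain ⟨h1, hN⟩ := Finset.mem_Icc.1 hn
    have := hcard (n - 1)
    rwa [List.getD_replicate _ (by omega), Nat.sub_add_cancel h1] at this
  have hmem : ∀ x ∈ s, f x ∈ Finset.Icc 1 N := fun x hx =>
    Finset.mem_Icc.2 ⟨hpos x hx, hle x hx⟩
  refine ⟨hmem, fun x hx y hy hxy => ?_, fun n hn => ?_⟩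
  · exact Finset.card_le_one.1 (hone _ (hmem y hy)).le x (Finset.mem_filter.2 ⟨hx, hxy⟩)
      y (Finset.mem_filter.2 ⟨hy, rfl⟩)
  · obtain ⟨x, hx⟩ := Finset.card_pos.1 ((hone n hn).symm ▸ Nat.one_pos)
    exact ⟨x, Finset.mem_filter.1 hx⟩

end Counting

/-! ### Tableaux -/

section Tableaux

open scoped Finset

variable {lam al : List ℕ} {T U : ℕ × ℕ → ℕ} {x y : ℕ × ℕ} {i j c d n k : ℕ}

lemma mem_cells : x ∈ cells lam ↔ x.2 < lam.getD x.1 0 := by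
  simp only [cells, Finset.mem_filter, Finset.mem_product, Finset.mem_range, and_iff_right_iff_imp]
  intro h
  have hlen : x.1 < lam.length := by
    by_contra hc
    rw [List.getD_eq_default _ _ (not_lt.1 hc)] at h
    exact Nat.not_lt_zero _ h
  rw [List.getD_eq_getElem _ _ hlen] at h
  have := List.le_sum_of_mem (List.getElem_mem hlen)
  exact ⟨hlen, by omega⟩

lemma card_cells (lam : List ℕ) : #(cells lam) = lam.sum := by
  have hrow : ∀ i, #{c ∈ Finset.range (lam.sum + 1) | c < lam.getD i 0} = lam.getD i 0 := by
    intro i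
    have hle : lam.getD i 0 ≤ lam.sum := by
      have := rowOffset_succ lam i
      have := rowOffset_le_sum lam (i + 1)
      omega
    rw [← Finset.card_range (lam.getD i 0)]
    congr 1
    ext c
    simp only [Finset.mem_filter, Finset.mem_range, Finset.card_range]
    omega
  rw [cells, Finset.card_filter, Finset.sum_product]
  simp only [← Finset.card_filter, hrow]
  rw [sum_range_getD, rowOffset_of_length_le le_rfl]

lemma mk_mem_cells_of_le (hcd : c ≤ d) (hd : (i, d) ∈ cells lam) : (i, c) ∈ cells lam :=
  mem_cells.2 (hcd.trans_lt (mem_cells.1 hd))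

lemma IsPartition.antitone_getD (hl : IsPartition lam) : Antitone fun i => lam.getD i 0 := by
  intro i j hij
  rcases hij.eq_or_lt with rfl | hij
  · exact le_rfl
  rcases Nat.lt_or_ge j lam.length with hj | hj
  · simp only [List.getD_eq_getElem _ _ hj, List.getD_eq_getElem _ _ (hij.trans hj)]
    exact List.pairwise_iff_getElem.1 hl.1 i j (hij.trans hj) hj hij
  · simp only [List.getD_eq_default _ _ hj, Nat.zero_le]

lemma IsPartition.isLowerSet_cells (hl : IsPartition lam) :
    IsLowerSet (cells lam : Set (ℕ × ℕ)) := fun _ _ hle hy =>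
  mem_cells.2 (hle.2.trans_lt ((mem_cells.1 hy).trans_le (hl.antitone_getD hle.1)))

lemma IsTab.eq_zero (h : IsTab lam al T) (hx : x ∉ cells lam) : T x = 0 := h.1 x hx

lemma IsTab.pos (h : IsTab lam al T) (hx : x ∈ cells lam) : 0 < T x := h.2.1 x hx

lemma IsTab.row_le (h : IsTab lam al T) (hcd : c ≤ d) (hd : (i, d) ∈ cells lam) :
    T (i, c) ≤ T (i, d) := by
  induction d, hcd using Nat.le_induction with
  | base => exact le_rfl
  | succ d _ ih => exact (ih (mk_mem_cells_of_le d.le_succ hd)).trans (h.2.2.1 i d hd)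

lemma IsTab.col_lt_succ (h : IsTab lam al T) (hx : (i + 1, c) ∈ cells lam) :
    T (i, c) < T (i + 1, c) := h.2.2.2.1 i c hx

lemma IsTab.card_filter_eq (h : IsTab lam al T) (k : ℕ) :
    #{x ∈ cells lam | T x = k + 1} = al.getD k 0 := h.2.2.2.2 k

lemma IsTab.lt_of_fst_lt (h : IsTab lam al T) (hl : IsPartition lam) (hy : y ∈ cells lam)
    (h1 : x.1 < y.1) (h2 : x.2 ≤ y.2) : T x < T y := by
  obtain ⟨i, c⟩ := x
  obtain ⟨j, d⟩ := y
  simp only at h1 h2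
  have hcol : T (i, d) < T (j, d) := by
    induction j, h1 using Nat.le_induction with
    | base => exact h.col_lt_succ hy
    | succ j _ ih =>
      have hj : (j, d) ∈ cells lam := hl.isLowerSet_cells (a := (j + 1, d)) (by simp) hy
      exact (ih hj).trans (h.col_lt_succ hy)
  exact (h.row_le h2 (hl.isLowerSet_cells (a := (j, d)) ⟨h1.le, le_rfl⟩ hy)).trans_lt hcol

lemma IsTab.monotoneOn (h : IsTab lam al T) (hl : IsPartition lam) :
    MonotoneOn T (cells lam) := by
  rintro ⟨i, c⟩ - ⟨j, d⟩ hy ⟨h1, h2⟩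
  rcases h1.eq_or_lt with h1 | h1
  · obtain rfl : i = j := h1
    exact h.row_le h2 hy
  · exact (h.lt_of_fst_lt hl hy h1 h2).le

lemma IsTab.eq_of_snd_eq (h : IsTab lam al T) (hl : IsPartition lam) (hx : x ∈ cells lam)
    (hy : y ∈ cells lam) (hT : T x = T y) (h2 : x.2 = y.2) : x = y := by
  rcases lt_trichotomy x.1 y.1 with h1 | h1 | h1
  · exact absurd hT (h.lt_of_fst_lt hl hy h1 h2.le).ne
  · exact Prod.ext h1 h2
  · exact absurd hT (h.lt_of_fst_lt hl hx h1 h2.ge).ne'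

lemma IsTab.card_filter_le (h : IsTab lam al T) (k : ℕ) :
    #{x ∈ cells lam | T x ≤ k} = rowOffset al k := by
  induction k with
  | zero =>
    rw [rowOffset_zero, Finset.card_eq_zero, Finset.filter_eq_empty_iff]
    exact fun x hx => (h.pos hx).not_ge
  | succ k ih => rw [rowOffset_succ, card_filter_le_succ, ih, h.card_filter_eq k]

lemma IsTab.le_length (h : IsTab lam al T) (hx : x ∈ cells lam) : T x ≤ al.length := by
  by_contra hc
  have hcard := h.card_filter_eq (T x - 1)
  rw [List.getD_eq_default _ _ (by omega), Finset.card_eq_zero,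
    Finset.filter_eq_empty_iff] at hcard
  exact hcard hx (by omega)

/-- `U` is a standard Young tableau of shape `lam`, i.e. a semistandard one in which each of
`1, …, lam.sum` occurs once. -/
abbrev IsStandard (lam : List ℕ) (U : ℕ × ℕ → ℕ) : Prop :=
  IsTab lam (List.replicate lam.sum 1) U

lemma IsStandard.bijOn (h : IsStandard lam U) :
    Set.BijOn U (cells lam) (Finset.Icc 1 lam.sum) :=
  bijOn_Icc_of_card_filter_eq (fun _ hx => h.pos hx) h.card_filter_eq

lemma IsStandard.le_sum (h : IsStandard lam U) (hx : x ∈ cells lam) : U x ≤ lam.sum :=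
  (Finset.mem_Icc.1 (h.bijOn.mapsTo hx)).2

lemma IsStandard.exists_eq (h : IsStandard lam U) (hn : n < lam.sum) :
    ∃ x ∈ cells lam, U x = n + 1 :=
  h.bijOn.surjOn (Finset.mem_coe.2 (Finset.mem_Icc.2 ⟨n.succ_pos, hn⟩))

lemma isStandard_of_injOn (hzero : ∀ x ∉ cells lam, U x = 0)
    (hmaps : Set.MapsTo U (cells lam) (Finset.Icc 1 lam.sum)) (hinj : Set.InjOn U (cells lam))
    (hrow : ∀ i c, (i, c + 1) ∈ cells lam → U (i, c) ≤ U (i, c + 1))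
    (hcol : ∀ i c, (i + 1, c) ∈ cells lam → U (i, c) < U (i + 1, c)) : IsStandard lam U := by
  have hcard : #(Finset.Icc 1 lam.sum) ≤ #(cells lam) := by
    rw [card_cells, Nat.card_Icc, Nat.add_sub_cancel]
  have hbij : Set.BijOn U (cells lam) (Finset.Icc 1 lam.sum) :=
    ⟨hmaps, hinj, Finset.surjOn_of_injOn_of_card_le U hmaps hinj hcard⟩
  exact ⟨hzero, fun x hx => (Finset.mem_Icc.1 (hmaps hx)).1, hrow, hcol,
    card_filter_eq_of_bijOn_Icc hbij⟩

lemma IsStandard.card_filter_lt_add_one (h : IsStandard lam U) (hx : x ∈ cells lam) :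
    #{y ∈ cells lam | U y < U x} + 1 = U x := by
  have hpos := h.pos hx
  have hle := h.le_sum hx
  have hcard := h.card_filter_le (U x - 1)
  simp only [Nat.le_sub_one_iff_lt hpos, rowOffset_replicate_one ((Nat.sub_le _ 1).trans hle)]
    at hcard
  omega

lemma IsStandard.fst_le_of_no_descent (h : IsStandard lam U) (hx : x ∈ cells lam)
    (hy : y ∈ cells lam) (hxy : U x ≤ U y)
    (hd : ∀ n, U x ≤ n → n < U y → ¬IsDescent lam U n) : y.1 ≤ x.1 := by
  obtain ⟨m, hm⟩ : ∃ m, U y = m := ⟨_, rfl⟩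
  rw [hm] at hxy hd
  induction m, hxy using Nat.le_induction generalizing y with
  | base => rw [h.bijOn.injOn hy hx hm]
  | succ m hxm ih =>
    have hpos := h.pos hx
    have hle := h.le_sum hy
    obtain ⟨z, hz, hzm⟩ := h.exists_eq (n := m - 1) (by omega)
    rw [Nat.sub_add_cancel (by omega)] at hzm
    have hzx : z.1 ≤ x.1 := ih hz (fun n h1 h2 => hd n h1 (h2.trans m.lt_succ_self)) hzm
    by_contra hc
    exact hd m hxm m.lt_succ_self ⟨z, hz, y, hy, hzm, hm, hzx.trans_lt (not_le.1 hc)⟩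

end Tableaux

/-! ### Standardization -/

section Standardization

open scoped Finset

variable {lam al : List ℕ} {T U : ℕ × ℕ → ℕ} {x y : ℕ × ℕ} {n k : ℕ}

lemma stdz_of_notMem (hx : x ∉ cells lam) : stdz lam T x = 0 := if_neg hx

lemma stdz_of_mem (hx : x ∈ cells lam) :
    stdz lam T x = #{y ∈ cells lam | T y < T x ∨ (T y = T x ∧ y.2 < x.2)} + 1 := if_pos hx

lemma stdz_lt_stdz_iff (hx : x ∈ cells lam) (hy : y ∈ cells lam) :
    stdz lam T x < stdz lam T y ↔ T x < T y ∨ T x = T y ∧ x.2 < y.2 := by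
  have := card_filter_lt_lt_card_filter_lt_iff (f := fun z => toLex (T z, z.2)) (y := y) hx
  simpa only [stdz_of_mem hx, stdz_of_mem hy, Nat.add_lt_add_iff_right,
    Prod.Lex.toLex_lt_toLex] using this

lemma mapsTo_stdz : Set.MapsTo (stdz lam T) (cells lam) (Finset.Icc 1 lam.sum) := by
  intro x hx
  rw [Finset.mem_coe, Finset.mem_Icc, stdz_of_mem hx, ← card_cells]
  refine ⟨Nat.succ_pos _, Finset.card_lt_card ?_⟩
  rw [Finset.ssubset_iff_of_subset (Finset.filter_subset _ _)]
  exact ⟨x, hx, by simp⟩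

lemma IsTab.isStandard_stdz (h : IsTab lam al T) (hl : IsPartition lam) :
    IsStandard lam (stdz lam T) := by
  refine isStandard_of_injOn (fun x hx => stdz_of_notMem hx) mapsTo_stdz
    (fun x hx y hy he => ?_) (fun i c hx => ?_) (fun i c hx => ?_)
  · have hxy := mt (stdz_lt_stdz_iff hx hy).2 he.not_lt
    have hyx := mt (stdz_lt_stdz_iff hy hx).2 he.not_gt
    exact h.eq_of_snd_eq hl hx hy (by omega) (by omega)
  · have hle := h.row_le c.le_succ hx
    refine ((stdz_lt_stdz_iff (mk_mem_cells_of_le c.le_succ hx) hx).2 ?_).le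
    exact hle.lt_or_eq.imp_right fun he => ⟨he, c.lt_succ_self⟩
  · have hx' : (i, c) ∈ cells lam := hl.isLowerSet_cells (a := (i + 1, c)) (by simp) hx
    exact (stdz_lt_stdz_iff hx' hx).2 (Or.inl (h.col_lt_succ hx))

lemma IsTab.stdz_le_rowOffset_iff (h : IsTab lam al T) (hx : x ∈ cells lam) :
    stdz lam T x ≤ rowOffset al k ↔ T x ≤ k := by
  rw [stdz_of_mem hx, ← h.card_filter_le k, Nat.add_one_le_iff]
  constructor
  · contrapose!
    intro hk
    exact Finset.card_le_card (Finset.monotone_filter_right _ fun z _ hz => Or.inl (hz.trans_lt hk))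
  · intro hk
    refine Finset.card_lt_card (Finset.ssubset_iff_of_subset ?_ |>.2 ⟨x, ?_, by simp⟩)
    · exact Finset.monotone_filter_right _ fun z _ hz => by omega
    · exact Finset.mem_filter.2 ⟨hx, hk⟩

lemma IsTab.blockIndex_comp_stdz (h : IsTab lam al T) (hsum : lam.sum = al.sum) :
    blockIndex al ∘ stdz lam T = T := by
  funext x
  by_cases hx : x ∈ cells lam
  · have hle : stdz lam T x ≤ al.sum := hsum ▸ (Finset.mem_Icc.1 (mapsTo_stdz hx)).2
    exact eq_of_forall_ge_iff fun k =>
      (blockIndex_le_iff hle).trans (h.stdz_le_rowOffset_iff hx)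
  · rw [Function.comp_apply, stdz_of_notMem hx, blockIndex_zero, h.eq_zero hx]

lemma IsTab.mem_Sset_of_isDescent_stdz (h : IsTab lam al T) (hl : IsPartition lam)
    (hd : IsDescent lam (stdz lam T) n) : n ∈ Sset al := by
  obtain ⟨x, hx, y, hy, hxn, hyn, h1⟩ := hd
  have hT : T x < T y := by
    refine ((stdz_lt_stdz_iff hx hy).1 (by omega)).elim id fun ⟨heq, h2⟩ => ?_
    exact absurd heq (h.lt_of_fst_lt hl hy h1 h2.le).ne
  have hx_le : n ≤ rowOffset al (T x) := hxn ▸ (h.stdz_le_rowOffset_iff hx).2 le_rfl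
  have hy_gt : rowOffset al (T x) < n + 1 := by
    rw [← hyn, ← not_le, h.stdz_le_rowOffset_iff hy]
    exact hT.not_ge
  exact ⟨T x, h.pos hx, hT.trans_le (h.le_length hy),
    le_antisymm hx_le (Nat.lt_succ_iff.1 hy_gt)⟩

lemma IsStandard.stdz_eq (h : IsStandard lam U)
    (hT : ∀ x ∈ cells lam, ∀ y ∈ cells lam, U x < U y → T x < T y ∨ T x = T y ∧ x.2 < y.2) :
    stdz lam T = U := by
  funext x
  by_cases hx : x ∈ cells lam
  · rw [stdz_of_mem hx, ← h.card_filter_lt_add_one hx]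
    congr 2
    refine Finset.filter_congr fun y hy => ⟨fun hyx => ?_, hT y hy x hx⟩
    by_contra hle
    rcases (not_lt.1 hle).eq_or_lt with heq | hlt
    · rw [h.bijOn.injOn hx hy heq] at hyx
      omega
    · have := hT x hx y hy hlt
      omega
  · rw [stdz_of_notMem hx, h.eq_zero hx]

lemma IsStandard.fst_le_of_blockIndex_eq (h : IsStandard lam U) (hsum : lam.sum = al.sum)
    (hd : ∀ n, IsDescent lam U n → n ∈ Sset al) (hx : x ∈ cells lam) (hy : y ∈ cells lam)
    (hxy : U x ≤ U y) (hb : blockIndex al (U x) = blockIndex al (U y)) : y.1 ≤ x.1 :=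
  h.fst_le_of_no_descent hx hy hxy fun n hxn hny hdn =>
    (blockIndex_lt_of_mem_Sset (hd n hdn) hxn hny (hsum ▸ h.le_sum hy)).ne hb

lemma IsStandard.isTab_blockIndex_comp (h : IsStandard lam U) (hl : IsPartition lam)
    (hsum : lam.sum = al.sum) (hd : ∀ n, IsDescent lam U n → n ∈ Sset al) :
    IsTab lam al (blockIndex al ∘ U) := by
  have hle : ∀ x ∈ cells lam, U x ≤ al.sum := fun x hx => hsum ▸ h.le_sum hx
  refine ⟨fun x hx => ?_, fun x hx => ?_, fun i c hx => ?_, fun i c hx => ?_, fun k => ?_⟩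
  · rw [Function.comp_apply, h.eq_zero hx, blockIndex_zero]
  · rw [Function.comp_apply, Nat.one_le_iff_ne_zero, ← Nat.pos_iff_ne_zero, ← not_le,
      blockIndex_le_iff (hle x hx), rowOffset_zero]
    exact (h.pos hx).not_ge
  · exact blockIndex_mono (hle _ hx) (h.row_le c.le_succ hx)
  · have hlt := h.col_lt_succ hx
    have hx' : (i, c) ∈ cells lam := hl.isLowerSet_cells (a := (i + 1, c)) (by simp) hx
    refine (blockIndex_mono (hle _ hx) hlt.le).lt_of_ne fun hb => ?_
    exact (h.fst_le_of_blockIndex_eq hsum hd hx' hx hlt.le hb).not_gt i.lt_succ_self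
  · have hcard : ∀ k, #{x ∈ cells lam | blockIndex al (U x) ≤ k} = rowOffset al k := by
      intro k
      rw [Finset.filter_congr fun x hx => blockIndex_le_iff (hle x hx), h.card_filter_le,
        rowOffset_replicate_one (hsum ▸ rowOffset_le_sum al k)]
    have hsucc := card_filter_le_succ (cells lam) (blockIndex al ∘ U) k
    simp only [Function.comp_apply, hcard, rowOffset_succ] at hsucc
    exact (Nat.add_left_cancel hsucc).symm

lemma IsStandard.stdz_blockIndex_comp (h : IsStandard lam U) (hl : IsPartition lam)
    (hsum : lam.sum = al.sum) (hd : ∀ n, IsDescent lam U n → n ∈ Sset al) :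
    stdz lam (blockIndex al ∘ U) = U := by
  refine h.stdz_eq fun x hx y hy hxy => ?_
  refine (blockIndex_mono (hsum ▸ h.le_sum hy) hxy.le).lt_or_eq.imp_right fun hb => ⟨hb, ?_⟩
  have h1 : y.1 ≤ x.1 := h.fst_le_of_blockIndex_eq hsum hd hx hy hxy.le hb
  by_contra h2
  exact hxy.not_ge (h.monotoneOn hl hy hx ⟨h1, not_lt.1 h2⟩)

lemma stdz_bijOn (hl : IsPartition lam) (hsum : lam.sum = al.sum) :
    Set.BijOn (stdz lam) {T | IsTab lam al T}
      {U | IsStandard lam U ∧ ∀ n, IsDescent lam U n → n ∈ Sset al} := by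
  refine Set.InvOn.bijOn (f' := (blockIndex al ∘ ·)) ⟨?_, ?_⟩ ?_ ?_
  · exact fun T hT => IsTab.blockIndex_comp_stdz hT hsum
  · exact fun U hU => hU.1.stdz_blockIndex_comp hl hsum hU.2
  · exact fun T hT => ⟨IsTab.isStandard_stdz hT hl, fun n => IsTab.mem_Sset_of_isDescent_stdz hT hl⟩
  · exact fun U hU => hU.1.isTab_blockIndex_comp hl hsum hU.2

end Standardization

/-! ### Words of row indices -/

section Words

open scoped Finset

variable {lam al w : List ℕ} {U : ℕ × ℕ → ℕ} {x : ℕ × ℕ} {n : ℕ}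

lemma idxOfNth_eq_iff {α : Type*} [BEq α] [LawfulBEq α] {l : List α} {a : α} {c : ℕ}
    (hc : c < l.count a) : l.idxOfNth a c = n ↔ l[n]? = some a ∧ (l.take n).count a = c := by
  rw [← List.countBefore_eq_count_take]
  constructor
  · rintro rfl
    have hlt := List.idxOfNth_lt_length_of_lt_count hc
    exact ⟨List.getElem?_eq_some_iff.2 ⟨hlt, List.getElem_idxOfNth_eq⟩,
      List.countBefore_idxOfNth_of_lt_count hc⟩
  · rintro ⟨hn, rfl⟩
    obtain ⟨hlt, rfl⟩ := List.getElem?_eq_some_iff.1 hn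
    exact List.idxOfNth_countBefore_getElem

/-- The word of the standard tableau `U` of shape `lam`: its `u`-th letter (1-based) is the 1-based
row index of the entry `u`. The sum has a single term, so that `wordOf lam T` is the word of
`stdz lam T`. -/
def rowWord (lam : List ℕ) (U : ℕ × ℕ → ℕ) : List ℕ :=
  (List.range lam.sum).map fun n => ∑ x ∈ cells lam with U x = n + 1, (x.1 + 1)

lemma length_rowWord (lam : List ℕ) (U : ℕ × ℕ → ℕ) : (rowWord lam U).length = lam.sum := by
  simp [rowWord]

lemma IsStandard.getElem?_rowWord (h : IsStandard lam U) (hx : x ∈ cells lam)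
    (hn : U x = n + 1) : (rowWord lam U)[n]? = some (x.1 + 1) := by
  have hlt : n < lam.sum := by
    have := h.le_sum hx
    omega
  have hsingle : {y ∈ cells lam | U y = n + 1} = {x} := by
    ext y
    simp only [Finset.mem_filter, Finset.mem_singleton]
    exact ⟨fun hy => h.bijOn.injOn hy.1 hx (hy.2.trans hn.symm), by rintro rfl; exact ⟨hx, hn⟩⟩
  simp [rowWord, hlt, hsingle]

lemma IsStandard.card_row_filter_eq (h : IsStandard lam U) (i k : ℕ) :
    #{c ∈ Finset.range (lam.getD i 0) | U (i, c) = k + 1} =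
      (rowWord lam U)[k]?.toList.count (i + 1) := by
  rcases Nat.lt_or_ge k lam.sum with hk | hk
  · obtain ⟨x, hx, hxk⟩ := h.exists_eq hk
    have hiff : ∀ c, c < lam.getD i 0 ∧ U (i, c) = k + 1 ↔ (i, c) = x := fun c =>
      ⟨fun hc => h.bijOn.injOn (mem_cells.2 hc.1) hx (hc.2.trans hxk.symm), by
        rintro rfl; exact ⟨mem_cells.1 hx, hxk⟩⟩
    have hfilter : {c ∈ Finset.range (lam.getD i 0) | U (i, c) = k + 1} =
        if i = x.1 then {x.2} else ∅ := by
      ext c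
      simp only [Finset.mem_filter, Finset.mem_range, hiff, Prod.ext_iff]
      split_ifs with hi <;> simp [hi]
    rw [hfilter, h.getElem?_rowWord hx hxk, Option.toList_some, List.count_singleton]
    split_ifs <;> simp_all
  · have hnone : (rowWord lam U)[k]? = none := by simpa [length_rowWord] using hk
    rw [hnone, Option.toList_none, List.count_nil, Finset.card_eq_zero,
      Finset.filter_eq_empty_iff]
    intro c hc hck
    have := h.le_sum (mem_cells.2 (Finset.mem_range.1 hc) : (i, c) ∈ cells lam)
    omega

lemma IsStandard.count_take_rowWord (h : IsStandard lam U) (i k : ℕ) :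
    ((rowWord lam U).take k).count (i + 1) =
      #{c ∈ Finset.range (lam.getD i 0) | U (i, c) ≤ k} := by
  induction k with
  | zero =>
    rw [List.take_zero, List.count_nil, eq_comm, Finset.card_eq_zero,
      Finset.filter_eq_empty_iff]
    exact fun c hc => (h.pos (mem_cells.2 (Finset.mem_range.1 hc))).not_ge
  | succ k ih =>
    rw [List.take_add_one, List.count_append, ih, card_filter_le_succ, h.card_row_filter_eq]

lemma IsStandard.isYam_rowWord (h : IsStandard lam U) (hl : IsPartition lam) :
    IsYam (rowWord lam U) := by
  intro k i
  rw [h.count_take_rowWord (i + 1), h.count_take_rowWord i]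
  refine Finset.card_le_card fun c hc => ?_
  rw [Finset.mem_filter, Finset.mem_range] at hc ⊢
  exact ⟨hc.1.trans_le (hl.antitone_getD i.le_succ),
    (h.col_lt_succ (mem_cells.2 hc.1)).le.trans hc.2⟩

lemma IsStandard.hasContent_rowWord (h : IsStandard lam U) : HasContent (rowWord lam U) lam := by
  constructor
  · intro i
    rw [← List.take_of_length_le (length_rowWord lam U).le, h.count_take_rowWord,
      Finset.filter_true_of_mem, Finset.card_range]
    exact fun c hc => h.le_sum (mem_cells.2 (Finset.mem_range.1 hc))
  · rw [List.count_eq_zero]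
    intro h0
    obtain ⟨n, hn⟩ := List.mem_iff_getElem?.1 h0
    have hlt : n < lam.sum := by
      rw [← length_rowWord lam U]
      exact (List.getElem?_eq_some_iff.1 hn).1
    obtain ⟨x, hx, hxn⟩ := h.exists_eq hlt
    rw [h.getElem?_rowWord hx hxn] at hn
    simp at hn

lemma IsStandard.isDescent_iff_rowWord (h : IsStandard lam U) :
    IsDescent lam U n ↔ (rowWord lam U).getD (n - 1) 0 < (rowWord lam U).getD n 0 := by
  constructor
  · rintro ⟨x, hx, y, hy, hxn, hyn, hlt⟩
    have hpos := h.pos hx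
    rw [List.getD_eq_getElem?_getD, List.getD_eq_getElem?_getD,
      h.getElem?_rowWord hx (n := n - 1) (by omega), h.getElem?_rowWord hy hyn]
    exact Nat.succ_lt_succ hlt
  · intro hlt
    obtain ⟨hpos, hn⟩ := pos_and_lt_length_of_getD_pred_lt hlt
    rw [length_rowWord] at hn
    obtain ⟨x, hx, hxn⟩ := h.exists_eq (n := n - 1) (by omega)
    obtain ⟨y, hy, hyn⟩ := h.exists_eq hn
    rw [List.getD_eq_getElem?_getD, List.getD_eq_getElem?_getD, h.getElem?_rowWord hx hxn,
      h.getElem?_rowWord hy hyn] at hlt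
    exact ⟨x, hx, y, hy, by omega, hyn, Nat.lt_of_succ_lt_succ hlt⟩

lemma IsStandard.isRibbonWord_rowWord_iff (h : IsStandard lam U) (hsum : lam.sum = al.sum) :
    IsRibbonWord al (fun _ => true) (rowWord lam U) ↔ ∀ n, IsDescent lam U n ↔ n ∈ Sset al := by
  simp only [isRibbonWord_connected_iff, length_rowWord, hsum, true_and, h.isDescent_iff_rowWord]

lemma HasContent.length_eq (hc : HasContent w lam) : w.length = lam.sum := by
  have hmem : ∀ a ∈ (w : Multiset ℕ), a ∈ Finset.range (lam.length + 1) := by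
    rintro (_ | i) ha
    · simp
    · have hpos : 0 < lam.getD i 0 := hc.1 i ▸ List.count_pos_iff.2 (Multiset.mem_coe.1 ha)
      rw [Finset.mem_range, Nat.succ_lt_succ_iff]
      by_contra hi
      exact hpos.ne' (List.getD_eq_default _ _ (not_lt.1 hi))
  rw [← Multiset.coe_card, ← Multiset.sum_count_eq_card hmem, Finset.sum_range_succ']
  simp only [Multiset.coe_count, hc.1, hc.2, add_zero]
  rw [sum_range_getD, rowOffset_of_length_le le_rfl]

/-- The tableau of shape `lam` read off a Yamanouchi word `w` of content `lam`: its `i`-th row lists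
the 1-based positions in `w` of the letter `i`. It is extended by `0` off the diagram. -/
def wordTableau (lam w : List ℕ) : ℕ × ℕ → ℕ := fun x =>
  if x ∈ cells lam then w.idxOfNth (x.1 + 1) x.2 + 1 else 0

lemma wordTableau_of_notMem (hx : x ∉ cells lam) : wordTableau lam w x = 0 := if_neg hx

lemma wordTableau_of_mem (hx : x ∈ cells lam) :
    wordTableau lam w x = w.idxOfNth (x.1 + 1) x.2 + 1 := if_pos hx

lemma HasContent.lt_count (hc : HasContent w lam) (hx : x ∈ cells lam) :
    x.2 < w.count (x.1 + 1) :=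
  (mem_cells.1 hx).trans_eq (hc.1 x.1).symm

lemma HasContent.wordTableau_eq_succ_iff (hc : HasContent w lam) (hx : x ∈ cells lam) :
    wordTableau lam w x = n + 1 ↔ w[n]? = some (x.1 + 1) ∧ (w.take n).count (x.1 + 1) = x.2 := by
  rw [wordTableau_of_mem hx, Nat.add_right_cancel_iff, idxOfNth_eq_iff (hc.lt_count hx)]

lemma HasContent.wordTableau_lt_wordTableau (hc : HasContent w lam) (hw : IsYam w) {i c : ℕ}
    (hx : (i, c) ∈ cells lam) (hy : (i + 1, c) ∈ cells lam) :
    wordTableau lam w (i, c) < wordTableau lam w (i + 1, c) := by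
  obtain ⟨m, hm⟩ : ∃ m, wordTableau lam w (i, c) = m + 1 := ⟨_, wordTableau_of_mem hx⟩
  obtain ⟨n, hn⟩ : ∃ n, wordTableau lam w (i + 1, c) = n + 1 := ⟨_, wordTableau_of_mem hy⟩
  obtain ⟨hwm, hcm⟩ := (hc.wordTableau_eq_succ_iff hx).1 hm
  obtain ⟨hwn, hcn⟩ := (hc.wordTableau_eq_succ_iff hy).1 hn
  simp only at hwm hcm hwn hcn
  have hcount : c + 1 ≤ (w.take (n + 1)).count (i + 1) := by
    refine le_trans (le_of_eq ?_) (hw (n + 1) i)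
    rw [List.take_add_one, List.count_append, hcn, hwn]
    simp
  rw [hm, hn, Nat.add_lt_add_iff_right]
  by_contra hle
  have hne : n ≠ m := by
    rintro rfl
    simp [hwm] at hwn
  have := ((List.take_prefix_take_left (l := w) (show n + 1 ≤ m by omega)).sublist).count_le (i + 1)
  omega

lemma HasContent.isStandard_wordTableau (hc : HasContent w lam) (hl : IsPartition lam)
    (hw : IsYam w) : IsStandard lam (wordTableau lam w) := by
  refine isStandard_of_injOn (fun x hx => wordTableau_of_notMem hx) (fun x hx => ?_)
    (fun x hx y hy hxy => ?_) (fun i c hx => ?_) (fun i c hx => ?_)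
  · rw [Finset.mem_coe, Finset.mem_Icc, wordTableau_of_mem hx, ← hc.length_eq]
    exact ⟨Nat.succ_pos _, List.idxOfNth_lt_length_of_lt_count (hc.lt_count hx)⟩
  · have hyn := wordTableau_of_mem (w := w) hy
    obtain ⟨hx1, hx2⟩ := (hc.wordTableau_eq_succ_iff hx).1 (hxy.trans hyn)
    obtain ⟨hy1, hy2⟩ := (hc.wordTableau_eq_succ_iff hy).1 hyn
    have h1 : x.1 + 1 = y.1 + 1 := Option.some_injective _ (hx1.symm.trans hy1)
    rw [h1] at hx2
    exact Prod.ext (Nat.succ_injective h1) (hx2.symm.trans hy2)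
  · rw [wordTableau_of_mem hx, wordTableau_of_mem (mk_mem_cells_of_le c.le_succ hx)]
    exact Nat.succ_le_succ (List.idxOfNth_mono c.le_succ)
  · exact hc.wordTableau_lt_wordTableau hw (hl.isLowerSet_cells (a := (i + 1, c)) (by simp) hx) hx

lemma HasContent.rowWord_wordTableau (hc : HasContent w lam) (hl : IsPartition lam)
    (hw : IsYam w) : rowWord lam (wordTableau lam w) = w := by
  have hU := hc.isStandard_wordTableau hl hw
  refine List.ext_getElem? fun n => ?_
  rcases Nat.lt_or_ge n lam.sum with hn | hn
  · obtain ⟨x, hx, hxn⟩ := hU.exists_eq hn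
    rw [hU.getElem?_rowWord hx hxn, ((hc.wordTableau_eq_succ_iff hx).1 hxn).1]
  · rw [List.getElem?_eq_none ((length_rowWord _ _).trans_le hn),
      List.getElem?_eq_none (hc.length_eq.trans_le hn)]

lemma IsStandard.row_lt_iff (h : IsStandard lam U) {i c d : ℕ} (hc : (i, c) ∈ cells lam)
    (hd : (i, d) ∈ cells lam) : U (i, c) < U (i, d) ↔ c < d := by
  refine ⟨fun hlt => ?_, fun hcd => (h.row_le hcd.le hd).lt_of_ne fun he => ?_⟩
  · by_contra hle
    exact (h.row_le (not_lt.1 hle) hc).not_gt hlt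
  · exact hcd.ne (congrArg Prod.snd (h.bijOn.injOn hc hd he))

lemma IsStandard.wordTableau_rowWord (h : IsStandard lam U) :
    wordTableau lam (rowWord lam U) = U := by
  funext x
  by_cases hx : x ∈ cells lam
  · obtain ⟨n, hn⟩ := Nat.exists_eq_add_one_of_ne_zero (h.pos hx).ne'
    rw [hn, h.hasContent_rowWord.wordTableau_eq_succ_iff hx]
    refine ⟨h.getElem?_rowWord hx hn, ?_⟩
    have hfilter : {c ∈ Finset.range (lam.getD x.1 0) | U (x.1, c) ≤ n} = Finset.range x.2 := by
      ext c
      simp only [Finset.mem_filter, Finset.mem_range, ← Nat.lt_succ_iff, Nat.succ_eq_add_one, ← hn]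
      constructor
      · exact fun hc => (h.row_lt_iff (mem_cells.2 hc.1) hx).1 hc.2
      · intro hc
        have hc' : c < lam.getD x.1 0 := hc.trans (mem_cells.1 hx)
        exact ⟨hc', (h.row_lt_iff (mem_cells.2 hc') hx).2 hc⟩
    rw [h.count_take_rowWord, hfilter, Finset.card_range]
  · rw [wordTableau_of_notMem hx, h.eq_zero hx]

lemma rowWord_bijOn (hl : IsPartition lam) :
    Set.BijOn (rowWord lam) {U | IsStandard lam U} {w | IsYam w ∧ HasContent w lam} := by
  refine Set.InvOn.bijOn (f' := wordTableau lam) ⟨?_, ?_⟩ ?_ ?_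
  · exact fun U hU => IsStandard.wordTableau_rowWord hU
  · exact fun w hw => hw.2.rowWord_wordTableau hl hw.1
  · exact fun U hU => ⟨IsStandard.isYam_rowWord hU hl, IsStandard.hasContent_rowWord hU⟩
  · exact fun w hw => hw.2.isStandard_wordTableau hl hw.1

end Words

/-- Theorem `th:gessel` / Corollary `l3new`(a): for a composition `al` of
`N` and a partition `nu` of `N`, the LR coefficient `c_{R_al}^{nu}` of the connected ribbon
`R_al` equals the number of standard Young tableaux of shape `nu` with descent set exactly
`S(al)`, and equals the number of `T ∈ Tab(nu, al)` whose standardization has descent set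
exactly `S(al)`. -/
theorem connected_ribbon_LR_coefficient_count
    (al nu : List ℕ) (hal : ∀ x ∈ al, 0 < x) (hnu : IsPartition nu)
    (hsum : nu.sum = al.sum) :
    Nat.card {w : List ℕ //
        IsRibbonWord al (fun _ => true) w ∧ IsYam w ∧ HasContent w nu} =
      Nat.card {U : ℕ × ℕ → ℕ //
        IsTab nu (List.replicate nu.sum 1) U ∧ ∀ n, IsDescent nu U n ↔ n ∈ Sset al} ∧
    Nat.card {w : List ℕ //
        IsRibbonWord al (fun _ => true) w ∧ IsYam w ∧ HasContent w nu} =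
      Nat.card {T : ℕ × ℕ → ℕ //
        IsTab nu al T ∧ ∀ n, IsDescent nu (stdz nu T) n ↔ n ∈ Sset al} := by
  have hword : Set.BijOn (rowWord nu)
      {U | IsStandard nu U ∧ ∀ n, IsDescent nu U n ↔ n ∈ Sset al}
      {w | IsRibbonWord al (fun _ => true) w ∧ IsYam w ∧ HasContent w nu} := by
    convert bijOn_sep_of_iff (rowWord_bijOn hnu)
      fun U hU => (hU.isRibbonWord_rowWord_iff hsum).symm using 1
    · rfl
    · exact Set.ext fun w => and_comm
  have hstd : Set.BijOn (stdz nu)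
      {T | IsTab nu al T ∧ ∀ n, IsDescent nu (stdz nu T) n ↔ n ∈ Sset al}
      {U | IsStandard nu U ∧ ∀ n, IsDescent nu U n ↔ n ∈ Sset al} := by
    convert bijOn_sep_of_iff (q := fun U => ∀ n, IsDescent nu U n ↔ n ∈ Sset al)
      (stdz_bijOn hnu hsum) fun T _ => Iff.rfl using 1
    · rfl
    · exact Set.ext fun U =>
        ⟨fun hU => ⟨⟨hU.1, fun n => (hU.2 n).1⟩, hU.2⟩, fun hU => ⟨hU.1.1, hU.2⟩⟩
  have hcard := (Nat.card_congr (hword.equiv _)).symm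
  exact ⟨hcard, hcard.trans (Nat.card_congr (hstd.equiv _)).symm⟩

end RibbonSupport
end

section
/- Let α = α̃_1·α̃_2·…·α̃_k be the concatenation of compositions α̃_1,…,α̃_k, and let R_α = R_{α̃_1} ⊕ ⋯ ⊕ R_{α̃_k} be the direct sum of the connected ribbons R_{α̃_i} (a ribbon whose connected components, from top to bottom, are R_{α̃_1},…,R_{α̃_k}, no two components sharing any edge). Then for every partition ν of |α|, the Littlewood–Richardson coefficient c_{R_α}^ν equals the number of standard Young tableaux of shape ν whose descent set is a subset of S(α) containing S(α) \ { |α̃_1|+⋯+|α̃_r| : 1 ≤ r ≤ k }. -/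
namespace RibbonSupport

/-! A lattice word `w` of content `ν` encodes a standard tableau of shape `ν`: entry `n + 1` lies in
row `i` exactly when the `n`-th letter (counting from `0`) is `i + 1`, and the lattice condition is
column strictness.  Under this bijection the descents of the tableau are the places where the word
rises.  A ribbon filling allows a rise of its reading word only at the end of a row, that is, at
an element of `S(α)`, and forces one there whenever the row overlaps the next; the gaps without an
overlap are the boundaries between components. -/

theorem countBefore_eq_card {α : Type*} [DecidableEq α] (w : List α) (x : α) (n : ℕ) :
    w.countBefore x n = ((Finset.range n).filter fun m => w[m]? = some x).card := by
  rw [List.countBefore_eq_count_take]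
  induction n with
  | zero => simp
  | succ n ih =>
    rw [List.take_add_one, List.count_append, ih, Finset.range_add_one, Finset.filter_insert]
    by_cases hn : w[n]? = some x
    · simp [hn]
    · cases h : w[n]? <;> simp_all

theorem countBefore_mono {α : Type*} [BEq α] (w : List α) (x : α) : Monotone (w.countBefore x) := by
  intro m n hmn
  simp only [List.countBefore_eq_count_take]
  exact (List.take_sublist_take_left hmn).count_le x

theorem countBefore_idxOfNth_add_one {α : Type*} [BEq α] [LawfulBEq α] {w : List α} {x : α}
    {c : ℕ} (hc : c < w.count x) : w.countBefore x (w.idxOfNth x c + 1) = c + 1 := by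
  have hlt := List.idxOfNth_lt_length_of_lt_count hc
  rw [List.countBefore_eq_count_take, List.take_add_one, List.count_append,
    ← List.countBefore_eq_count_take, List.countBefore_idxOfNth_of_lt_count hc,
    List.getElem?_eq_getElem hlt, List.getElem_idxOfNth_eq, Option.toList_some,
    List.count_singleton_self]

/-! ### Reading words of ribbons -/

/-- The positions `n`, counted from `1`, at which the `(n + 1)`-st letter of `w` exceeds the
`n`-th one. -/
def ascents (w : List ℕ) : Set ℕ := {n | 0 < n ∧ n < w.length ∧ w.getD (n - 1) 0 < w.getD n 0}

section Composition

variable {N : ℕ} (a : Composition N)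

theorem strictMonoOn_rowOffset : StrictMonoOn (rowOffset a.blocks) (Set.Iic a.length) :=
  fun i hi j hj hij =>
    a.boundary.strictMono (a := ⟨i, Nat.lt_succ_of_le hi⟩) (b := ⟨j, Nat.lt_succ_of_le hj⟩) hij

theorem rowOffset_succ_s11 {i : ℕ} (hi : i < a.length) :
    rowOffset a.blocks (i + 1) = rowOffset a.blocks i + a.blocks.getD i 0 := by
  rw [List.getD_eq_getElem _ _ hi]
  exact a.sizeUpTo_succ hi

theorem Sset_subset_Ioo : Sset a.blocks ⊆ Set.Ioo 0 N := by
  rintro n ⟨k, hk0, hk, rfl⟩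
  have h0 := strictMonoOn_rowOffset a (Set.mem_Iic.2 (Nat.zero_le _)) (Set.mem_Iic.2 hk.le) hk0
  have hN := strictMonoOn_rowOffset a (Set.mem_Iic.2 hk.le) (Set.mem_Iic.2 le_rfl) hk
  exact ⟨(Nat.zero_le _).trans_lt h0, hN.trans_eq a.sizeUpTo_length⟩

theorem notMem_Sset_iff {n : ℕ} (hn0 : 0 < n) (hn : n < N) :
    n ∉ Sset a.blocks ↔
      ∃ i j, i < a.length ∧ j + 1 < a.blocks.getD i 0 ∧ n = rowOffset a.blocks i + j + 1 := by
  constructor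
  · intro hnS
    let i := a.index ⟨n, hn⟩
    have hle : rowOffset a.blocks i ≤ n := a.sizeUpTo_index_le ⟨n, hn⟩
    have hlt : n < rowOffset a.blocks (i + 1) := a.lt_sizeUpTo_index_succ ⟨n, hn⟩
    have hne : rowOffset a.blocks i ≠ n := by
      intro h
      refine hnS ⟨i, Nat.pos_of_ne_zero fun hi => ?_, i.2, h.symm⟩
      rw [hi] at h
      exact hn0.ne h
    rw [rowOffset_succ_s11 a i.2] at hlt
    exact ⟨i, n - rowOffset a.blocks i - 1, i.2, by omega, by omega⟩
  · rintro ⟨i, j, hi, hj, rfl⟩ ⟨k, -, hk, hnk : _ = rowOffset a.blocks k⟩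
    have hki : k < i + 1 := by
      rw [← (strictMonoOn_rowOffset a).lt_iff_lt (Set.mem_Iic.2 hk.le) (Set.mem_Iic.2 hi),
        rowOffset_succ_s11 a hi]
      omega
    have hik : i < k := by
      rw [← (strictMonoOn_rowOffset a).lt_iff_lt (Set.mem_Iic.2 hi.le) (Set.mem_Iic.2 hk.le)]
      omega
    omega

theorem ascents_subset_Sset_iff {w : List ℕ} (hw : w.length = N) :
    ascents w ⊆ Sset a.blocks ↔
      ∀ i j, i < a.length → j + 1 < a.blocks.getD i 0 →
        w.getD (rowOffset a.blocks i + j + 1) 0 ≤ w.getD (rowOffset a.blocks i + j) 0 := by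
  constructor
  · intro h i j hi hj
    have hN : rowOffset a.blocks (i + 1) ≤ N := a.sizeUpTo_le (i + 1)
    rw [rowOffset_succ_s11 a hi] at hN
    by_contra! hlt
    exact (notMem_Sset_iff a (Nat.succ_pos _) (by omega)).2 ⟨i, j, hi, hj, rfl⟩
      (h ⟨Nat.succ_pos _, by omega, hlt⟩)
  · rintro h n ⟨hn0, hn, hlt⟩
    by_contra hnS
    obtain ⟨i, j, hi, hj, rfl⟩ := (notMem_Sset_iff a hn0 (hw ▸ hn)).1 hnS
    exact (h i j hi hj).not_gt hlt

theorem isRibbonWord_iff_ascents {ov : ℕ → Bool} {B : Set ℕ}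
    (hov : ∀ i, i + 1 < a.length → (ov i = true ↔ rowOffset a.blocks (i + 1) ∉ B)) (w : List ℕ) :
    IsRibbonWord a.blocks ov w ↔
      w.length = N ∧ ascents w ⊆ Sset a.blocks ∧ Sset a.blocks \ B ⊆ ascents w := by
  unfold IsRibbonWord
  rw [a.blocks_sum]
  refine and_congr_right fun hw => and_congr (ascents_subset_Sset_iff a hw).symm ?_
  constructor
  · rintro h n ⟨hnS, hnB⟩
    obtain ⟨hn0, hn⟩ := Sset_subset_Ioo a hnS
    obtain ⟨k, hk0, hk, rfl⟩ := hnS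
    obtain ⟨i, rfl⟩ := Nat.exists_eq_add_one.2 hk0
    exact ⟨hn0, hw ▸ hn, h i hk ((hov i hk).2 hnB)⟩
  · intro h i hi hi_ov
    exact (h ⟨⟨i + 1, Nat.succ_pos i, hi, rfl⟩, (hov i hi).1 hi_ov⟩).2.2

end Composition

/-! ### Standard tableaux and their words -/

/-- `U` is a standard Young tableau of shape `nu`, as a semistandard tableau of content
`(1, 1, …, 1)`. -/
abbrev IsSYT (nu : List ℕ) (U : ℕ × ℕ → ℕ) : Prop := IsTab nu (List.replicate nu.sum 1) U

theorem mem_cells_s11 {nu : List ℕ} {i c : ℕ} : (i, c) ∈ cells nu ↔ c < nu.getD i 0 := by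
  simp only [cells, Finset.mem_filter, Finset.mem_product, Finset.mem_range, and_iff_right_iff_imp]
  intro h
  have hi : i < nu.length := by
    by_contra! hi
    simp [hi] at h
  refine ⟨hi, ?_⟩
  rw [List.getD_eq_getElem _ _ hi] at h
  exact h.trans (Nat.lt_succ_of_le (List.single_le_sum (by simp) _ (List.getElem_mem hi)))

theorem getD_succ_le_getD {nu : List ℕ} (hnu : nu.Pairwise (· ≥ ·)) (i : ℕ) :
    nu.getD (i + 1) 0 ≤ nu.getD i 0 := by
  by_cases h : i + 1 < nu.length
  · rw [List.getD_eq_getElem _ _ h, List.getD_eq_getElem _ _ (Nat.lt_of_succ_lt h)]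
    exact List.pairwise_iff_getElem.1 hnu i (i + 1) _ h (Nat.lt_succ_self i)
  · rw [List.getD_eq_default _ _ (not_lt.1 h)]
    exact Nat.zero_le _

namespace IsSYT

variable {nu : List ℕ} {U : ℕ × ℕ → ℕ}

theorem bijOn (hU : IsSYT nu U) : Set.BijOn U (cells nu) (Set.Icc 1 nu.sum) := by
  obtain ⟨-, hpos, -, -, hcard⟩ := hU
  have hfiber (n : ℕ) (hn : n < nu.sum) :
      ∃ x, (cells nu).filter (fun x => U x = n + 1) = {x} := by
    rw [← Finset.card_eq_one, hcard, List.getD_replicate _ hn]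
  have hle : ∀ x ∈ cells nu, U x ≤ nu.sum := by
    intro x hx
    by_contra! hlt
    have hempty := hcard (U x - 1)
    rw [List.getD_eq_default _ _ (by simpa using Nat.le_sub_one_of_lt hlt), Finset.card_eq_zero,
      Finset.filter_eq_empty_iff] at hempty
    exact hempty hx (Nat.sub_add_cancel (hpos x hx)).symm
  refine ⟨fun x hx => ⟨hpos x hx, hle x hx⟩, fun x hx y hy hxy => ?_, fun n hn => ?_⟩
  · obtain ⟨n, hn⟩ := Nat.exists_eq_add_one.2 (hpos x hx)
    obtain ⟨z, hz⟩ := hfiber n (by have := hle x hx; omega)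
    simp only [Finset.ext_iff, Finset.mem_filter, Finset.mem_singleton] at hz
    exact ((hz x).1 ⟨hx, hn⟩).trans ((hz y).1 ⟨hy, hxy ▸ hn⟩).symm
  · obtain ⟨n, rfl⟩ := Nat.exists_eq_add_one.2 hn.1
    obtain ⟨z, hz⟩ := hfiber n hn.2
    have hmem := hz ▸ Finset.mem_singleton_self z
    exact ⟨z, Finset.mem_filter.1 hmem⟩

theorem exists_eq_add_one (hU : IsSYT nu U) {n : ℕ} (hn : n < nu.sum) :
    ∃ x ∈ cells nu, U x = n + 1 :=
  hU.bijOn.surjOn ⟨Nat.succ_pos n, hn⟩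

theorem strictMonoOn_row (hU : IsSYT nu U) (i : ℕ) :
    StrictMonoOn (fun c => U (i, c)) (Set.Iio (nu.getD i 0)) := by
  refine strictMonoOn_of_lt_add_one Set.ordConnected_Iio fun c _ hc hc' => ?_
  refine (hU.2.2.1 i c (mem_cells_s11.2 hc')).lt_of_ne fun h => ?_
  simpa using hU.bijOn.injOn (mem_cells_s11.2 hc) (mem_cells_s11.2 hc') h

theorem stdz_eq (hU : IsSYT nu U) : stdz nu U = U := by
  funext x
  by_cases hx : x ∈ cells nu
  · have himage : ((cells nu).filter fun y => U y < U x ∨ U y = U x ∧ y.2 < x.2).image U =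
        Finset.Ico 1 (U x) := by
      ext n
      simp only [Finset.mem_image, Finset.mem_filter, Finset.mem_Ico]
      constructor
      · rintro ⟨y, ⟨hy, hlt | ⟨heq, hcol⟩⟩, rfl⟩
        · exact ⟨hU.2.1 y hy, hlt⟩
        · rw [hU.bijOn.injOn hy hx heq] at hcol
          exact absurd hcol (lt_irrefl _)
      · rintro ⟨hn0, hn⟩
        obtain ⟨y, hy, rfl⟩ := hU.bijOn.surjOn ⟨hn0, hn.le.trans (hU.bijOn.mapsTo hx).2⟩
        exact ⟨y, ⟨hy, Or.inl hn⟩, rfl⟩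
    have hinj := hU.bijOn.injOn.mono (Finset.coe_subset.2 (Finset.filter_subset
      (fun y => U y < U x ∨ U y = U x ∧ y.2 < x.2) (cells nu)))
    rw [stdz, if_pos hx, ← Finset.card_image_of_injOn hinj, himage, Nat.card_Ico]
    exact Nat.sub_add_cancel (hU.2.1 x hx)
  · rw [stdz, if_neg hx, hU.1 x hx]

theorem getElem?_wordOf_of_mem (hU : IsSYT nu U) {x : ℕ × ℕ} {n : ℕ} (hx : x ∈ cells nu)
    (hxn : U x = n + 1) : (wordOf nu U)[n]? = some (x.1 + 1) := by
  have hfiber : (cells nu).filter (fun y => U y = n + 1) = {x} := by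
    ext y
    rw [Finset.mem_filter, Finset.mem_singleton]
    refine ⟨fun ⟨hy, hyn⟩ => hU.bijOn.injOn hy hx (hyn.trans hxn.symm), ?_⟩
    rintro rfl
    exact ⟨hx, hxn⟩
  have hn : n < nu.sum := by simpa [hxn] using (hU.bijOn.mapsTo hx).2
  rw [wordOf, List.getElem?_map, List.getElem?_range hn, Option.map_some, hU.stdz_eq, hfiber,
    Finset.sum_singleton]

theorem getElem?_wordOf (hU : IsSYT nu U) {i n : ℕ} :
    (wordOf nu U)[n]? = some (i + 1) ↔ ∃ c, (i, c) ∈ cells nu ∧ U (i, c) = n + 1 := by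
  constructor
  · intro h
    have hn : n < nu.sum := by simpa [wordOf] using (List.getElem?_eq_some_iff.1 h).1
    obtain ⟨⟨j, c⟩, hx, hxn⟩ := hU.exists_eq_add_one hn
    obtain rfl : j = i := by simpa [h, eq_comm] using hU.getElem?_wordOf_of_mem hx hxn
    exact ⟨c, hx, hxn⟩
  · rintro ⟨c, hx, hxn⟩
    exact hU.getElem?_wordOf_of_mem hx hxn

theorem countBefore_wordOf (hU : IsSYT nu U) (i n : ℕ) :
    (wordOf nu U).countBefore (i + 1) n =
      ((Finset.range (nu.getD i 0)).filter fun c => U (i, c) ≤ n).card := by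
  rw [countBefore_eq_card]
  symm
  refine Finset.card_bij (fun c _ => U (i, c) - 1) ?_ ?_ ?_ <;>
    simp only [Finset.mem_filter, Finset.mem_range, and_imp, hU.getElem?_wordOf, mem_cells_s11]
  · intro c hc hcn
    have := hU.2.1 _ (mem_cells_s11.2 hc)
    exact ⟨by omega, c, hc, by omega⟩
  · intro c hc _ d hd _ hcd
    have := hU.2.1 _ (mem_cells_s11.2 hc)
    have := hU.2.1 _ (mem_cells_s11.2 hd)
    exact (hU.strictMonoOn_row i).injOn hc hd (show U (i, c) = U (i, d) by omega)
  · rintro m hm ⟨c, hc, hcm⟩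
    exact ⟨c, ⟨hc, by omega⟩, by omega⟩

theorem countBefore_wordOf_of_mem (hU : IsSYT nu U) {i c n : ℕ} (hx : (i, c) ∈ cells nu)
    (hxn : U (i, c) = n + 1) : (wordOf nu U).countBefore (i + 1) n = c := by
  rw [mem_cells_s11] at hx
  have hleft : ((Finset.range (nu.getD i 0)).filter fun d => U (i, d) ≤ n) = Finset.range c := by
    ext d
    rw [Finset.mem_filter, Finset.mem_range, Finset.mem_range, ← Nat.lt_add_one_iff, ← hxn]
    refine ⟨fun ⟨hd, hlt⟩ => ((hU.strictMonoOn_row i).lt_iff_lt hd hx).1 hlt, fun hdc => ?_⟩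
    exact ⟨hdc.trans hx, hU.strictMonoOn_row i (hdc.trans hx) hx hdc⟩
  rw [hU.countBefore_wordOf, hleft, Finset.card_range]

theorem isYam_wordOf (hU : IsSYT nu U) (hnu : nu.Pairwise (· ≥ ·)) : IsYam (wordOf nu U) := by
  intro n i
  simp only [← List.countBefore_eq_count_take, hU.countBefore_wordOf]
  refine Finset.card_le_card fun c => ?_
  simp only [Finset.mem_filter, Finset.mem_range]
  rintro ⟨hc, hcn⟩
  exact ⟨hc.trans_le (getD_succ_le_getD hnu i),
    (hU.2.2.2.1 i c (mem_cells_s11.2 hc)).le.trans hcn⟩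

theorem hasContent_wordOf (hU : IsSYT nu U) : HasContent (wordOf nu U) nu := by
  constructor
  · intro i
    rw [← List.countBefore_of_ge_length le_rfl, hU.countBefore_wordOf, Finset.filter_true_of_mem,
      Finset.card_range]
    intro c hc
    simpa [wordOf] using (hU.bijOn.mapsTo (mem_cells_s11.2 (Finset.mem_range.1 hc))).2
  · rw [List.count_eq_zero, List.mem_iff_getElem?]
    rintro ⟨n, hn⟩
    have hn' : n < nu.sum := by simpa [wordOf] using (List.getElem?_eq_some_iff.1 hn).1
    obtain ⟨x, hx, hxn⟩ := hU.exists_eq_add_one hn'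
    simp [hU.getElem?_wordOf_of_mem hx hxn] at hn

theorem ascents_wordOf (hU : IsSYT nu U) : ascents (wordOf nu U) = {n | IsDescent nu U n} := by
  have hletter {x : ℕ × ℕ} {n : ℕ} (hx : x ∈ cells nu) (hxn : U x = n + 1) :
      (wordOf nu U).getD n 0 = x.1 + 1 := by
    rw [List.getD_eq_getElem?_getD, hU.getElem?_wordOf_of_mem hx hxn, Option.getD_some]
  have hlen : (wordOf nu U).length = nu.sum := by simp [wordOf]
  ext n
  constructor
  · rintro ⟨hn0, hn, hlt⟩
    rw [hlen] at hn
    obtain ⟨n, rfl⟩ := Nat.exists_eq_add_one.2 hn0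
    obtain ⟨x, hx, hxn⟩ := hU.exists_eq_add_one (Nat.lt_of_succ_lt hn)
    obtain ⟨y, hy, hyn⟩ := hU.exists_eq_add_one hn
    rw [Nat.add_sub_cancel, hletter hx hxn, hletter hy hyn] at hlt
    exact ⟨x, hx, y, hy, hxn, hyn, Nat.lt_of_succ_lt_succ hlt⟩
  · rintro ⟨x, hx, y, hy, hxn, hyn, hlt⟩
    obtain ⟨hn0, -⟩ := hxn ▸ hU.bijOn.mapsTo hx
    obtain ⟨-, hn⟩ := hyn ▸ hU.bijOn.mapsTo hy
    refine ⟨hn0, by omega, ?_⟩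
    rw [hletter hx (hxn.trans (Nat.sub_add_cancel hn0).symm), hletter hy hyn]
    exact Nat.succ_lt_succ hlt

end IsSYT

/-! ### The tableau of a lattice word -/

/-- The standard tableau of shape `nu` encoded by the word `w`: the cell in row `i` and column `c`
contains the position, counted from `1`, of the `(c + 1)`-st letter `i + 1` of `w`. -/
def tableauOfWord (nu w : List ℕ) : ℕ × ℕ → ℕ := fun x =>
  if x ∈ cells nu then w.idxOfNth (x.1 + 1) x.2 + 1 else 0

theorem IsYam.idxOfNth_lt {w : List ℕ} (hY : IsYam w) {i c : ℕ} (hc : c < w.count (i + 2)) :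
    w.idxOfNth (i + 1) c < w.idxOfNth (i + 2) c := by
  have hcount : w.count (i + 2) ≤ w.count (i + 1) := by simpa using hY w.length i
  have hprefix := hY (w.idxOfNth (i + 2) c + 1) i
  simp only [← List.countBefore_eq_count_take, countBefore_idxOfNth_add_one hc] at hprefix
  have hle : w.idxOfNth (i + 1) c ≤ w.idxOfNth (i + 2) c := by
    by_contra! hlt
    have := countBefore_mono w (i + 1) (Nat.add_one_le_iff.2 hlt)
    rw [List.countBefore_idxOfNth_of_lt_count (hc.trans_le hcount)] at this
    omega
  refine hle.lt_of_ne fun heq => ?_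
  have hlt := List.idxOfNth_lt_length_of_lt_count hc
  have h1 : w[w.idxOfNth (i + 2) c] = i + 1 := by simp only [← heq, List.getElem_idxOfNth_eq]
  rw [List.getElem_idxOfNth_eq] at h1
  omega

namespace HasContent

variable {nu w : List ℕ}

theorem mem_cells_iff (hC : HasContent w nu) {i c : ℕ} :
    (i, c) ∈ cells nu ↔ c < w.count (i + 1) := by
  rw [mem_cells_s11, hC.1]

theorem exists_eq_add_one (hC : HasContent w nu) {x : ℕ} (hx : x ∈ w) : ∃ i, x = i + 1 :=
  Nat.exists_eq_add_one_of_ne_zero fun h => List.count_eq_zero.1 hC.2 (h ▸ hx)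

theorem length_eq_s11 (hC : HasContent w nu) : w.length = nu.sum := by
  have hletters : ∀ x ∈ (w : Multiset ℕ),
      x ∈ (Finset.range nu.length).map (addRightEmbedding 1) := by
    intro x hx
    obtain ⟨i, rfl⟩ := hC.exists_eq_add_one hx
    refine Finset.mem_map_of_mem _ (Finset.mem_range.2 ?_)
    by_contra! hi
    have hzero := hC.1 i
    rw [List.getD_eq_default _ _ hi, List.count_eq_zero] at hzero
    exact hzero hx
  have hcard := Multiset.sum_count_eq_card hletters
  simp only [Finset.sum_map, addRightEmbedding_apply, Multiset.coe_count, hC.1,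
    Multiset.coe_card] at hcard
  rw [← hcard, Finset.sum_range, ← Fin.sum_univ_getElem]
  simp

theorem filter_tableauOfWord_eq (hC : HasContent w nu) {n : ℕ} (hn : n < w.length) :
    (cells nu).filter (fun x => tableauOfWord nu w x = n + 1) =
      {(w[n] - 1, w.countBefore w[n] n)} := by
  obtain ⟨k, hk⟩ := hC.exists_eq_add_one (List.getElem_mem hn)
  ext ⟨i, c⟩
  rw [Finset.mem_filter, Finset.mem_singleton, Prod.mk.injEq]
  constructor
  · rintro ⟨hx, hxn⟩
    have hidx : w.idxOfNth (i + 1) c = n := by simpa [tableauOfWord, hx] using hxn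
    subst hidx
    rw [List.getElem_idxOfNth_eq, List.countBefore_idxOfNth_of_lt_count (hC.mem_cells_iff.1 hx)]
    exact ⟨rfl, rfl⟩
  · rintro ⟨rfl, rfl⟩
    have hx : (w[n] - 1, w.countBefore w[n] n) ∈ cells nu := by
      rw [hC.mem_cells_iff, hk, Nat.add_sub_cancel, ← hk]
      exact List.countBefore_lt_count_getElem
    refine ⟨hx, ?_⟩
    rw [tableauOfWord, if_pos hx, hk, Nat.add_sub_cancel, ← hk, List.idxOfNth_countBefore_getElem]

theorem isSYT_tableauOfWord (hC : HasContent w nu) (hY : IsYam w) :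
    IsSYT nu (tableauOfWord nu w) := by
  refine ⟨fun x hx => if_neg hx, fun x hx => ?_, fun i c h => ?_, fun i c h => ?_, fun k => ?_⟩
  · simp [tableauOfWord, hx]
  · have h' : (i, c) ∈ cells nu := mem_cells_s11.2 (Nat.lt_of_succ_lt (mem_cells_s11.1 h))
    simpa [tableauOfWord, h, h'] using List.idxOfNth_mono (Nat.le_succ c)
  · have hc := hC.mem_cells_iff.1 h
    have h' : (i, c) ∈ cells nu :=
      hC.mem_cells_iff.2 (hc.trans_le (by simpa using hY w.length i))
    simpa [tableauOfWord, h, h'] using hY.idxOfNth_lt hc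
  · rw [← hC.length_eq_s11]
    by_cases hk : k < w.length
    · rw [hC.filter_tableauOfWord_eq hk, Finset.card_singleton, List.getD_replicate _ hk]
    · rw [List.getD_eq_default _ _ (by simpa using hk), Finset.card_eq_zero,
        Finset.filter_eq_empty_iff]
      intro x hx
      have hlt := List.idxOfNth_lt_length_of_lt_count (hC.mem_cells_iff.1 hx)
      simp only [tableauOfWord, if_pos hx]
      omega

theorem wordOf_tableauOfWord (hC : HasContent w nu) (hY : IsYam w) :
    wordOf nu (tableauOfWord nu w) = w := by
  refine List.ext_getElem (by simp [wordOf, hC.length_eq_s11]) fun n hn hn' => ?_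
  obtain ⟨i, hi⟩ := hC.exists_eq_add_one (List.getElem_mem hn')
  have hmem := hC.filter_tableauOfWord_eq hn' ▸ Finset.mem_singleton_self _
  obtain ⟨hx, hxn⟩ := Finset.mem_filter.1 hmem
  have hletter := (hC.isSYT_tableauOfWord hY).getElem?_wordOf_of_mem hx hxn
  rw [List.getElem?_eq_getElem hn, Option.some_inj] at hletter
  omega

end HasContent

theorem IsSYT.tableauOfWord_wordOf {nu : List ℕ} {U : ℕ × ℕ → ℕ} (hU : IsSYT nu U) :
    tableauOfWord nu (wordOf nu U) = U := by
  funext ⟨i, c⟩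
  by_cases hx : (i, c) ∈ cells nu
  · obtain ⟨n, hn⟩ := Nat.exists_eq_add_one.2 (hU.2.1 _ hx)
    obtain ⟨hlt, hletter⟩ := List.getElem?_eq_some_iff.1 (hU.getElem?_wordOf_of_mem hx hn)
    have hidx := List.idxOfNth_countBefore_of_lt_length_of_beq (beq_iff_eq.2 hletter)
    rw [hU.countBefore_wordOf_of_mem hx hn] at hidx
    rw [tableauOfWord, if_pos hx, hidx, hn]
  · rw [tableauOfWord, if_neg hx, hU.1 _ hx]

theorem bijOn_wordOf {nu : List ℕ} (hnu : nu.Pairwise (· ≥ ·)) :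
    Set.BijOn (wordOf nu) {U | IsSYT nu U} {w | IsYam w ∧ HasContent w nu} :=
  Set.InvOn.bijOn (f' := tableauOfWord nu)
    ⟨fun _ hU => hU.tableauOfWord_wordOf, fun _ hw => hw.2.wordOf_tableauOfWord hw.1⟩
    (fun _ hU => ⟨hU.isYam_wordOf hnu, hU.hasContent_wordOf⟩)
    (fun _ hw => hw.2.isSYT_tableauOfWord hw.1)

/-! ### Littlewood–Richardson coefficients of ribbons -/

theorem card_ribbon_LR_words_eq_card_SYT {nu : List ℕ} (hnu : nu.Pairwise (· ≥ ·))
    (a : Composition nu.sum) {ov : ℕ → Bool} {B : Set ℕ}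
    (hov : ∀ i, i + 1 < a.length → (ov i = true ↔ rowOffset a.blocks (i + 1) ∉ B)) :
    Nat.card {w : List ℕ // IsRibbonWord a.blocks ov w ∧ IsYam w ∧ HasContent w nu} =
      Nat.card {U : ℕ × ℕ → ℕ // IsSYT nu U ∧ {n | IsDescent nu U n} ⊆ Sset a.blocks ∧
        Sset a.blocks \ B ⊆ {n | IsDescent nu U n}} := by
  have hribbon {U : ℕ × ℕ → ℕ} (hU : IsSYT nu U) :
      IsRibbonWord a.blocks ov (wordOf nu U) ↔ {n | IsDescent nu U n} ⊆ Sset a.blocks ∧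
        Sset a.blocks \ B ⊆ {n | IsDescent nu U n} := by
    rw [isRibbonWord_iff_ascents a hov, hU.ascents_wordOf]
    exact and_iff_right hU.hasContent_wordOf.length_eq_s11
  obtain ⟨hmaps, hinj, hsurj⟩ := bijOn_wordOf hnu
  symm
  refine Nat.card_congr (Set.BijOn.equiv (wordOf nu) (s := {U | _}) (t := {w | _})
    ⟨fun U hU => ⟨(hribbon hU.1).2 hU.2, hmaps hU.1⟩, hinj.mono fun U hU => hU.1, ?_⟩)
  rintro w ⟨hR, hw⟩
  obtain ⟨U, hU, rfl⟩ := hsurj hw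
  exact ⟨U, ⟨hU, (hribbon hU).1 hR⟩, rfl⟩

theorem sum_map_sum_take_eq_rowOffset (L : List (List ℕ)) (r : ℕ) :
    ((L.take r).map List.sum).sum =
      rowOffset L.flatten ((L.take r).map List.length).sum := by
  rw [rowOffset, List.map_take (f := List.length), List.take_sum_flatten, List.sum_flatten]

theorem rowOffset_flatten_eq_iff {L : List (List ℕ)} (hL : ∀ x ∈ L.flatten, 0 < x) {k : ℕ}
    (hk : k ≤ L.flatten.length) (r : ℕ) :
    rowOffset L.flatten k = ((L.take r).map List.sum).sum ↔
      k = ((L.take r).map List.length).sum := by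
  have hr : ((L.take r).map List.length).sum ≤ L.flatten.length := by
    rw [← List.length_flatten]
    exact (List.take_sublist r L).flatten.length_le
  rw [sum_map_sum_take_eq_rowOffset]
  exact (strictMonoOn_rowOffset ⟨L.flatten, hL _, rfl⟩).injOn.eq_iff hk hr

/-- Corollary `l3new`(b): let `al = α̃₁·…·α̃ₖ` be the concatenation of the
compositions in `L`, and let `R_al` be the direct sum of the connected ribbons `R_{α̃ᵢ}`
(rows `j`, `j+1` overlap iff `j+1` is not a cumulative row-length boundary of `L`).  Then for
every partition `nu` of `|al|`, the LR coefficient `c_{R_al}^{nu}` equals the number of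
standard Young tableaux of shape `nu` whose descent set is a subset of `S(al)` containing
`S(al) \ { |α̃₁|+⋯+|α̃_r| : 1 ≤ r ≤ k }`. -/
theorem disconnected_ribbon_LR_coefficient_count
    (L : List (List ℕ)) (hL : ∀ c ∈ L, c ≠ [] ∧ ∀ x ∈ c, 0 < x)
    (nu : List ℕ) (hnu : IsPartition nu) (hsum : nu.sum = (L.map List.sum).sum) :
    Nat.card {w : List ℕ //
        IsRibbonWord L.flatten
          (fun j => decide
            (j + 1 ∉ (Finset.Icc 1 L.length).image fun r => ((L.take r).map List.length).sum))
          w ∧ IsYam w ∧ HasContent w nu} =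
      Nat.card {U : ℕ × ℕ → ℕ //
        IsTab nu (List.replicate nu.sum 1) U ∧
        (∀ n, IsDescent nu U n → n ∈ Sset L.flatten) ∧
        (∀ n, n ∈ Sset L.flatten →
          (¬ ∃ r, 1 ≤ r ∧ r ≤ L.length ∧ n = ((L.take r).map List.sum).sum) →
          IsDescent nu U n)} := by
  have hpos : ∀ x ∈ L.flatten, 0 < x := by
    intro x hx
    obtain ⟨c, hc, hxc⟩ := List.mem_flatten.1 hx
    exact (hL c hc).2 x hxc
  let a : Composition nu.sum := ⟨L.flatten, hpos _, by rw [hsum, List.sum_flatten]⟩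
  have hcuts (k : ℕ) (hk : k ≤ a.length) :
      (∃ r, 1 ≤ r ∧ r ≤ L.length ∧ rowOffset L.flatten k = ((L.take r).map List.sum).sum) ↔
        k ∈ (Finset.Icc 1 L.length).image fun r => ((L.take r).map List.length).sum := by
    simp only [rowOffset_flatten_eq_iff hpos hk, Finset.mem_image, Finset.mem_Icc, and_assoc,
      eq_comm]
  simpa only [Set.subset_def, Set.mem_sdiff, Set.mem_ofPred_eq, and_imp] using
    card_ribbon_LR_words_eq_card_SYT hnu.1 a
      (B := {n | ∃ r, 1 ≤ r ∧ r ≤ L.length ∧ n = ((L.take r).map List.sum).sum})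
      fun i hi => decide_eq_true_iff.trans (not_congr (hcuts (i + 1) hi.le).symm)

end RibbonSupport
end
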